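/- (Wong's inequality for q = ∞.) Let 0 < s < t be real numbers. Then for every ε > 0 there exists a constant C > 0 such that ‖J_{−s} φ‖_∞ ≤ ε ‖J_{−t} φ‖_∞ + C ‖φ‖_∞ for all φ ∈ 𝒮(ℝⁿ), where ‖·‖_∞ denotes the supremum norm. (This case follows from the quasinormability of the space 𝒟_{L¹}.) -/

import Mathlib

open MeasureTheory Complex
open scoped FourierTransform ENNReal SchwartzMap

/-- The Bessel potential `J_z f = 𝓕⁻¹((1+|ξ|²)^(-z/2) · 𝓕 f)` of a function on `ℝⁿ`. -/
noncomputable def besselPotential (n : ℕ) (z : ℂ)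
    (f : EuclideanSpace ℝ (Fin n) → ℂ) : EuclideanSpace ℝ (Fin n) → ℂ :=
  𝓕⁻ (fun ξ => ((1 : ℂ) + (‖ξ‖ : ℂ) ^ 2) ^ (-z / 2) * 𝓕 f ξ)

/-!
With Gaussian symbols `exp (-τ‖ξ‖²)` for the heat semigroup, the Laplace transform of the gamma law
gives `(1 + ‖ξ‖²) ^ (-r / 2) = 𝔼 exp (-τ‖ξ‖²)` for `τ` gamma distributed with shape `r / 2`. Hence
`J_{-s} φ`, which is the Bessel potential of order `r = t - s` of `J_{-t} φ`, is an average of the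
heat evolutions of `J_{-t} φ`. The heat semigroup contracts the supremum norm, so the times `τ ≤ δ`
contribute at most `ℙ (τ ≤ δ) * ‖J_{-t} φ‖_∞`, and this probability tends to `0` with `δ`. Every
later time factors through the heat operator at time `δ`, whose composition with `J_{-t}` has a
Schwartz symbol and is therefore bounded by a multiple of `‖φ‖_∞`.
-/

open Filter Set SchwartzMap ProbabilityTheory
open scoped Topology Convolution ComplexOrder

section Gaussian

theorem exists_one_add_pow_mul_exp_neg_mul_sq_le {τ : ℝ} (hτ : 0 < τ) (k : ℕ) :
    ∃ C : ℝ, ∀ r : ℝ, 0 ≤ r → (1 + r) ^ k * Real.exp (-(τ * r ^ 2)) ≤ C := by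
  refine ⟨k.factorial * Real.exp (1 + 1 / (4 * τ)), fun r hr ↦ ?_⟩
  have hpow : (1 + r) ^ k ≤ Real.exp (1 + r) * k.factorial := by
    rw [← div_le_iff₀ (by positivity)]
    exact Real.pow_div_factorial_le_exp (1 + r) (by positivity) k
  have hsquare : 1 / (4 * τ) - r + τ * r ^ 2 = (2 * τ * r - 1) ^ 2 / (4 * τ) := by
    field_simp
    ring
  have hexponent : 1 + r + -(τ * r ^ 2) ≤ 1 + 1 / (4 * τ) := by
    have : 0 ≤ (2 * τ * r - 1) ^ 2 / (4 * τ) := by positivity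
    linarith
  calc (1 + r) ^ k * Real.exp (-(τ * r ^ 2))
      ≤ Real.exp (1 + r) * k.factorial * Real.exp (-(τ * r ^ 2)) := by gcongr
    _ = k.factorial * Real.exp (1 + r + -(τ * r ^ 2)) := by rw [Real.exp_add (1 + r)]; ring
    _ ≤ k.factorial * Real.exp (1 + 1 / (4 * τ)) := by gcongr

theorem exists_norm_iteratedFDeriv_exp_comp_le {W : Type*} [NormedAddCommGroup W]
    [NormedSpace ℝ W] {w : W → ℝ} (hw : w.HasTemperateGrowth) (n : ℕ) :
    ∃ (C : ℝ) (l : ℕ), 0 ≤ C ∧ ∀ x,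
      ‖iteratedFDeriv ℝ n (fun y ↦ Real.exp (w y)) x‖ ≤ C * (1 + ‖x‖) ^ l * Real.exp (w x) := by
  obtain ⟨l, C, -, hC⟩ := hw.norm_iteratedFDeriv_le_uniform n
  refine ⟨n.factorial * max 1 C ^ n, l * n, by positivity, fun x ↦ ?_⟩
  have hD : 1 ≤ max 1 C * (1 + ‖x‖) ^ l :=
    one_le_mul_of_one_le_of_one_le (le_max_left _ _) (one_le_pow₀ (by linarith [norm_nonneg x]))
  have hexp (i : ℕ) (_ : i ≤ n) :
      ‖iteratedFDeriv ℝ i Real.exp (w x)‖ ≤ Real.exp (w x) := by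
    rw [norm_iteratedFDeriv_eq_norm_iteratedDeriv, iteratedDeriv_eq_iterate,
      Real.iter_deriv_exp, Real.norm_eq_abs, Real.abs_exp]
  have hinner (i : ℕ) (hi : 1 ≤ i) (hin : i ≤ n) :
      ‖iteratedFDeriv ℝ i w x‖ ≤ (max 1 C * (1 + ‖x‖) ^ l) ^ i :=
    calc ‖iteratedFDeriv ℝ i w x‖ ≤ C * (1 + ‖x‖) ^ l := hC i hin x
      _ ≤ max 1 C * (1 + ‖x‖) ^ l := by gcongr; exact le_max_right _ _
      _ ≤ (max 1 C * (1 + ‖x‖) ^ l) ^ i := le_self_pow₀ hD (by lia)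
  calc ‖iteratedFDeriv ℝ n (fun y ↦ Real.exp (w y)) x‖
      ≤ n.factorial * Real.exp (w x) * (max 1 C * (1 + ‖x‖) ^ l) ^ n :=
        norm_iteratedFDeriv_comp_le (N := (⊤ : ℕ∞)) Real.contDiff_exp hw.1
          (by exact_mod_cast le_top) x hexp hinner
    _ = n.factorial * max 1 C ^ n * (1 + ‖x‖) ^ (l * n) * Real.exp (w x) := by
        rw [mul_pow, pow_mul]; ring

variable {V : Type*} [NormedAddCommGroup V] [InnerProductSpace ℝ V]

/-- The Gaussian `x ↦ exp (-τ‖x‖²)` as a Schwartz function, the symbol of the heat operator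
`heatOp τ`. -/
noncomputable def schwartzGaussian (τ : ℝ) (hτ : 0 < τ) : 𝓢(V, ℝ) where
  toFun x := Real.exp (-(τ * ‖x‖ ^ 2))
  smooth' := Real.contDiff_exp.comp (contDiff_const.mul (contDiff_norm_sq ℝ)).neg
  decay' k n := by
    have hw : (fun x : V ↦ -(τ * ‖x‖ ^ 2)).HasTemperateGrowth := by fun_prop
    obtain ⟨C, l, hC, hderiv⟩ := exists_norm_iteratedFDeriv_exp_comp_le hw n
    obtain ⟨B, hB⟩ := exists_one_add_pow_mul_exp_neg_mul_sq_le hτ (k + l)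
    refine ⟨C * B, fun x ↦ ?_⟩
    calc ‖x‖ ^ k * ‖iteratedFDeriv ℝ n (fun x : V ↦ Real.exp (-(τ * ‖x‖ ^ 2))) x‖
        ≤ (1 + ‖x‖) ^ k * (C * (1 + ‖x‖) ^ l * Real.exp (-(τ * ‖x‖ ^ 2))) := by
          gcongr
          · linarith
          · exact hderiv x
      _ = C * ((1 + ‖x‖) ^ (k + l) * Real.exp (-(τ * ‖x‖ ^ 2))) := by rw [pow_add]; ring
      _ ≤ C * B := by gcongr; exact hB _ (norm_nonneg x)

theorem schwartzGaussian_apply {τ : ℝ} (hτ : 0 < τ) (x : V) :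
    schwartzGaussian τ hτ x = Real.exp (-(τ * ‖x‖ ^ 2)) :=
  rfl

theorem hasTemperateGrowth_exp_neg_mul_norm_sq {τ : ℝ} (hτ : 0 < τ) :
    (fun x : V ↦ Real.exp (-(τ * ‖x‖ ^ 2))).HasTemperateGrowth :=
  (schwartzGaussian τ hτ).hasTemperateGrowth

end Gaussian

section SupremumNorm

theorem eLpNorm_top_convolution_lsmul_le {𝕜 G F : Type*} [NontriviallyNormedField 𝕜]
    [NormedAddCommGroup F] [NormedSpace 𝕜 F] [NormedSpace ℝ F] [AddGroup G] [MeasurableSpace G]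
    [MeasurableAdd₂ G] [MeasurableNeg G] {μ : Measure G} [SFinite μ] [μ.IsAddLeftInvariant]
    {f : G → 𝕜} (hf : AEStronglyMeasurable f μ) (g : G → F) :
    eLpNorm (f ⋆[ContinuousLinearMap.lsmul 𝕜 𝕜, μ] g) ∞ μ ≤ eLpNorm f 1 μ * eLpNorm g ∞ μ := by
  refine eLpNormEssSup_le_of_ae_enorm_bound (.of_forall fun x ↦ ?_)
  have hg : ∀ᵐ y ∂μ, ‖g (x - y)‖ₑ ≤ eLpNorm g ∞ μ :=
    (quasiMeasurePreserving_sub_left μ x).ae ae_le_eLpNormEssSup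
  calc ‖(f ⋆[ContinuousLinearMap.lsmul 𝕜 𝕜, μ] g) x‖ₑ
      ≤ ∫⁻ y, ‖f y • g (x - y)‖ₑ ∂μ := enorm_integral_le_lintegral_enorm _
    _ ≤ ∫⁻ y, ‖f y‖ₑ * eLpNorm g ∞ μ ∂μ := by
        refine lintegral_mono_ae ?_
        filter_upwards [hg] with y hy
        rw [enorm_smul]
        gcongr
    _ = eLpNorm f 1 μ * eLpNorm g ∞ μ := by
        rw [eLpNorm_one_eq_lintegral_enorm, lintegral_mul_const'' _ hf.enorm]

theorem enorm_le_eLpNorm_top_of_continuous {X F : Type*} [TopologicalSpace X] [MeasurableSpace X]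
    {μ : Measure X} [μ.IsOpenPosMeasure] [TopologicalSpace F] [ContinuousENorm F] {f : X → F}
    (hf : Continuous f) (x : X) : ‖f x‖ₑ ≤ eLpNorm f ∞ μ := by
  have hdense : Dense {y | ‖f y‖ₑ ≤ eLpNorm f ∞ μ} := Measure.dense_of_ae ae_le_eLpNormEssSup
  have hclosed : IsClosed {y | ‖f y‖ₑ ≤ eLpNorm f ∞ μ} :=
    isClosed_le hf.enorm continuous_const
  exact Set.eq_univ_iff_forall.1 (hclosed.closure_eq.symm.trans hdense.closure_eq) x

end SupremumNorm

section GammaLaw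

theorem exists_gt_measure_Iic_lt {α : Type*} [LinearOrder α] [TopologicalSpace α] [OrderTopology α]
    [DenselyOrdered α] [NoMaxOrder α] [FirstCountableTopology α] [MeasurableSpace α]
    [OpensMeasurableSpace α] (μ : Measure α) [IsFiniteMeasure μ] {a : α} {ε : ℝ≥0∞}
    (ha : μ (Iic a) < ε) : ∃ b > a, μ (Iic b) < ε := by
  have hlim : Tendsto (μ ∘ Iic) (𝓝[>] a) (𝓝 (μ (⋂ b > a, Iic b))) :=
    tendsto_measure_biInter_gt (fun _ _ ↦ nullMeasurableSet_Iic)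
      (fun _ _ _ hij ↦ Iic_subset_Iic.2 hij) ((exists_gt a).imp fun _ hb ↦ ⟨hb, measure_ne_top _ _⟩)
  have hinter : ⋂ b > a, Iic b = Iic a := by
    ext x
    simp [forall_gt_imp_ge_iff_le_of_dense]
  rw [hinter] at hlim
  exact (eventually_mem_nhdsWithin.and (hlim.eventually_lt_const ha)).exists

theorem gammaMeasure_Iic_zero (a r : ℝ) : gammaMeasure a r (Iic 0) = 0 := by
  rw [gammaMeasure, withDensity_apply _ measurableSet_Iic, ← setLIntegral_congr Iio_ae_eq_Iic,
    lintegral_gammaPDF_of_nonpos le_rfl]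

theorem ae_pos_gammaMeasure (a r : ℝ) : ∀ᵐ x ∂gammaMeasure a r, 0 < x := by
  simpa using measure_eq_zero_iff_ae_notMem.1 (gammaMeasure_Iic_zero a r)

theorem integral_gammaPDFReal_eq_one {a r : ℝ} (ha : 0 < a) (hr : 0 < r) :
    ∫ x, gammaPDFReal a r x = 1 := by
  rw [integral_eq_lintegral_of_nonneg_ae (.of_forall (gammaPDFReal_nonneg ha hr)) (by fun_prop)]
  exact congrArg ENNReal.toReal (lintegral_gammaPDF_eq_one ha hr)

theorem gammaPDFReal_mul_exp_neg_mul {r u : ℝ} (a x : ℝ) (hr : 0 < r) (hru : 0 < r + u) :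
    gammaPDFReal a r x * Real.exp (-(x * u)) = (r / (r + u)) ^ a * gammaPDFReal a (r + u) x := by
  unfold gammaPDFReal
  split_ifs
  · have : (r + u) ^ a ≠ 0 := by positivity
    rw [Real.div_rpow hr.le hru.le, mul_assoc, ← Real.exp_add]
    field_simp
    ring_nf
  · simp

theorem integral_exp_neg_mul_gammaMeasure {a r u : ℝ} (ha : 0 < a) (hr : 0 < r)
    (hru : 0 < r + u) :
    ∫ x, Real.exp (-(x * u)) ∂gammaMeasure a r = (r / (r + u)) ^ a := by
  have hdensity (x : ℝ) : (gammaPDF a r x).toReal = gammaPDFReal a r x :=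
    ENNReal.toReal_ofReal (gammaPDFReal_nonneg ha hr x)
  have hmeas : Measurable (gammaPDF a r) := (measurable_gammaPDFReal a r).ennreal_ofReal
  rw [gammaMeasure, integral_withDensity_eq_integral_toReal_smul hmeas
    (.of_forall fun _ ↦ ENNReal.ofReal_lt_top)]
  simp_rw [hdensity, smul_eq_mul, gammaPDFReal_mul_exp_neg_mul a _ hr hru]
  rw [integral_const_mul, integral_gammaPDFReal_eq_one ha hru, mul_one]

end GammaLaw

variable {V : Type*} [NormedAddCommGroup V] [InnerProductSpace ℝ V] [FiniteDimensional ℝ V]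
  [MeasurableSpace V] [BorelSpace V]
  {E : Type*} [NormedAddCommGroup E] [NormedSpace ℂ E]

section FourierMultiplier

theorem fourierMultiplierCLM_eq_convolution [CompleteSpace E] (σ : 𝓢(V, ℂ)) (φ : 𝓢(V, E)) :
    fourierMultiplierCLM E σ φ =
      SchwartzMap.convolution (ContinuousLinearMap.lsmul ℂ ℂ) (𝓕⁻ σ) φ := by
  rw [fourierMultiplierCLM_apply]
  apply (FourierTransform.fourierCLE ℂ 𝓢(V, E)).injective
  ext x
  simp [fourier_convolution, smulLeftCLM_apply_apply σ.hasTemperateGrowth]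

theorem eLpNorm_top_fourierMultiplierCLM_le [CompleteSpace E] (σ : 𝓢(V, ℂ)) (φ : 𝓢(V, E)) :
    eLpNorm (fourierMultiplierCLM E σ φ) ∞ volume ≤
      eLpNorm (𝓕⁻ σ : 𝓢(V, ℂ)) 1 volume * eLpNorm φ ∞ volume := by
  rw [fourierMultiplierCLM_eq_convolution, funext (convolution_apply _ (𝓕⁻ σ) φ)]
  exact eLpNorm_top_convolution_lsmul_le (𝓕⁻ σ : 𝓢(V, ℂ)).continuous.aestronglyMeasurable φ

theorem eLpNorm_top_fourierMultiplierCLM_ofReal_le [CompleteSpace E] (σ : 𝓢(V, ℝ)) (φ : 𝓢(V, E)) :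
    eLpNorm (fourierMultiplierCLM E σ φ) ∞ volume ≤
      eLpNorm (𝓕⁻ (σ.postcompCLM ofRealCLM) : 𝓢(V, ℂ)) 1 volume * eLpNorm φ ∞ volume := by
  rw [← fourierMultiplierCLM_ofReal ℂ σ.hasTemperateGrowth]
  exact eLpNorm_top_fourierMultiplierCLM_le (σ.postcompCLM ofRealCLM) φ

theorem eLpNorm_one_eq_enorm_fourier_zero {k : V → ℂ} (hk : Integrable k) (hk₀ : ∀ y, 0 ≤ k y) :
    eLpNorm k 1 volume = ‖𝓕 k 0‖ₑ := by
  have hfourier : 𝓕 k 0 = ((∫ y, ‖k y‖ : ℝ) : ℂ) := by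
    rw [Real.fourier_eq, ← integral_complex_ofReal]
    simp [Complex.norm_of_nonneg' (hk₀ _)]
  have hnonneg : 0 ≤ ∫ y, ‖k y‖ := by positivity
  rw [hfourier, eLpNorm_one_eq_lintegral_enorm, ← ofReal_integral_norm_eq_lintegral_enorm hk,
    ← ofReal_norm, Complex.norm_of_nonneg hnonneg]

end FourierMultiplier

section HeatSemigroup

/-- The heat operator `exp (τΔ / 4π²)` on Schwartz functions, i.e. the Fourier multiplier with
symbol `exp (-τ‖ξ‖²)`. It is meant for `0 ≤ τ`: the symbol is not of temperate growth when `τ < 0`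
and `V` is nontrivial, and `fourierMultiplierCLM` then takes its junk value `0`. -/
noncomputable def heatOp (τ : ℝ) : 𝓢(V, E) →L[ℝ] 𝓢(V, E) :=
  fourierMultiplierCLM E fun ξ ↦ Real.exp (-(τ * ‖ξ‖ ^ 2))

/-- The heat kernel, i.e. the function whose convolution with `φ` is `heatOp τ φ`, complex valued so
that it acts on `E`-valued functions. -/
noncomputable def heatKernel (τ : ℝ) (hτ : 0 < τ) : 𝓢(V, ℂ) :=
  𝓕⁻ ((schwartzGaussian τ hτ : 𝓢(V, ℝ)).postcompCLM ofRealCLM)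

/-- The operator `J_{-s}` on Schwartz functions, i.e. the Fourier multiplier with symbol
`(1 + ‖ξ‖²) ^ (s / 2)`. The sign is such that `besselOp s` loses `s` derivatives. -/
noncomputable def besselOp (s : ℝ) : 𝓢(V, E) →L[ℝ] 𝓢(V, E) :=
  fourierMultiplierCLM E fun ξ ↦ (1 + ‖ξ‖ ^ 2) ^ (s / 2)

variable [CompleteSpace E]

theorem heatOp_heatOp {σ τ : ℝ} (hσ : 0 < σ) (hτ : 0 < τ) (φ : 𝓢(V, E)) :
    heatOp σ (heatOp τ φ) = heatOp (σ + τ) φ := by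
  simp only [heatOp]
  rw [fourierMultiplierCLM_fourierMultiplierCLM_apply (hasTemperateGrowth_exp_neg_mul_norm_sq hσ)
    (hasTemperateGrowth_exp_neg_mul_norm_sq hτ)]
  congr 2 with ξ
  rw [Pi.mul_apply, ← Real.exp_add]
  ring_nf

theorem besselOp_besselOp (s t : ℝ) (φ : 𝓢(V, E)) :
    besselOp s (besselOp t φ) = besselOp (s + t) φ := by
  simp only [besselOp]
  rw [fourierMultiplierCLM_fourierMultiplierCLM_apply (by fun_prop) (by fun_prop)]
  congr 2 with ξ
  rw [Pi.mul_apply, ← Real.rpow_add (by positivity), add_div]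

theorem heatKernel_nonneg {τ : ℝ} (hτ : 0 < τ) (y : V) : 0 ≤ heatKernel τ hτ y := by
  have hsymbol : ((schwartzGaussian τ hτ : 𝓢(V, ℝ)).postcompCLM ofRealCLM : V → ℂ) =
      fun ξ ↦ cexp (-(τ : ℂ) * (‖ξ‖ : ℂ) ^ 2) := by
    ext ξ
    simp [schwartzGaussian_apply]
  have hvalue : (Real.pi / τ : ℂ) ^ (Module.finrank ℝ V / 2 : ℂ) *
        cexp (-(Real.pi : ℂ) ^ 2 * (‖-y‖ : ℂ) ^ 2 / τ) =
      (((Real.pi / τ) ^ (Module.finrank ℝ V / 2 : ℝ) *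
        Real.exp (-Real.pi ^ 2 * ‖-y‖ ^ 2 / τ) : ℝ) : ℂ) := by
    simp [Complex.ofReal_cpow (show 0 ≤ Real.pi / τ by positivity)]
  rw [heatKernel, fourierInv_coe, Real.fourierInv_eq_fourier_neg, hsymbol,
    fourier_gaussian_innerProductSpace (by simpa using hτ), hvalue, Complex.zero_le_real]
  positivity

theorem eLpNorm_one_heatKernel {τ : ℝ} (hτ : 0 < τ) :
    eLpNorm (heatKernel τ hτ : 𝓢(V, ℂ)) 1 volume = 1 := by
  rw [eLpNorm_one_eq_enorm_fourier_zero (heatKernel τ hτ).integrable (heatKernel_nonneg hτ),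
    ← fourier_coe, heatKernel, FourierTransform.fourier_fourierInv_eq]
  simp [schwartzGaussian_apply]

theorem eLpNorm_top_heatOp_le {τ : ℝ} (hτ : 0 < τ) (φ : 𝓢(V, E)) :
    eLpNorm (heatOp τ φ) ∞ volume ≤ eLpNorm φ ∞ volume :=
  calc eLpNorm (heatOp τ φ) ∞ volume
      ≤ eLpNorm (heatKernel τ hτ : 𝓢(V, ℂ)) 1 volume * eLpNorm φ ∞ volume :=
        eLpNorm_top_fourierMultiplierCLM_ofReal_le (schwartzGaussian τ hτ) φ
    _ = eLpNorm φ ∞ volume := by rw [eLpNorm_one_heatKernel, one_mul]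

theorem exists_eLpNorm_top_heatOp_besselOp_le (s : ℝ) {τ : ℝ} (hτ : 0 < τ) :
    ∃ C : ℝ, 0 < C ∧ ∀ φ : 𝓢(V, E),
      eLpNorm (heatOp τ (besselOp s φ)) ∞ volume ≤ ENNReal.ofReal C * eLpNorm φ ∞ volume := by
  have hw : (fun ξ : V ↦ (1 + ‖ξ‖ ^ 2) ^ (s / 2)).HasTemperateGrowth := by fun_prop
  let σ : 𝓢(V, ℝ) :=
    smulLeftCLM ℝ (fun ξ : V ↦ (1 + ‖ξ‖ ^ 2) ^ (s / 2)) (schwartzGaussian τ hτ)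
  obtain ⟨C, -, hC, -⟩ := ENNReal.lt_iff_exists_real_btwn.1
    ((𝓕⁻ (σ.postcompCLM ofRealCLM) : 𝓢(V, ℂ)).memLp 1).eLpNorm_lt_top
  refine ⟨C, ENNReal.ofReal_pos.1 hC.pos, fun φ ↦ ?_⟩
  have hσ : heatOp τ (besselOp s φ) = fourierMultiplierCLM E σ φ := by
    rw [heatOp, besselOp, fourierMultiplierCLM_fourierMultiplierCLM_apply
      (hasTemperateGrowth_exp_neg_mul_norm_sq hτ) hw]
    congr 2 with ξ
    simp only [σ, smulLeftCLM_apply_apply hw, Pi.mul_apply, smul_eq_mul, mul_comm,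
      schwartzGaussian_apply]
  rw [hσ]
  exact (eLpNorm_top_fourierMultiplierCLM_ofReal_le σ φ).trans (by gcongr)

end HeatSemigroup

section Subordination

theorem fourierMultiplierCLM_apply_eq_integral {g : V → ℝ} (hg : g.HasTemperateGrowth)
    (φ : 𝓢(V, E)) (x : V) :
    fourierMultiplierCLM E g φ x = ∫ ξ, 𝐞 (inner ℝ ξ x) • g ξ • 𝓕 φ ξ := by
  rw [fourierMultiplierCLM_apply, fourierInv_coe, Real.fourierInv_eq]
  simp_rw [smulLeftCLM_apply_apply hg]

theorem integrable_prod_fourierChar_smul_exp_neg_mul_smul {μ : Measure ℝ} [IsFiniteMeasure μ]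
    (hμ : ∀ᵐ τ ∂μ, 0 ≤ τ) {f : V → E} (hf : Integrable f) (x : V) :
    Integrable (fun p : ℝ × V ↦
      𝐞 (inner ℝ p.2 x) • Real.exp (-(p.1 * ‖p.2‖ ^ 2)) • f p.2) (μ.prod volume) := by
  refine (hf.norm.comp_snd μ).mono' ?_ ?_
  · have hchar : Continuous fun p : ℝ × V ↦ (𝐞 (inner ℝ p.2 x) : ℂ) := by
      have := Real.continuous_fourierChar
      fun_prop
    have hexp : Continuous fun p : ℝ × V ↦ Real.exp (-(p.1 * ‖p.2‖ ^ 2)) := by fun_prop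
    exact hchar.aestronglyMeasurable.smul (hexp.aestronglyMeasurable.smul hf.1.comp_snd)
  · filter_upwards [Measure.quasiMeasurePreserving_fst.ae hμ] with p hp
    rw [Circle.norm_smul, norm_smul, Real.norm_eq_abs, Real.abs_exp]
    refine mul_le_of_le_one_left (norm_nonneg _) (Real.exp_le_one_iff.2 ?_)
    rw [neg_nonpos]
    positivity

variable [CompleteSpace E]

theorem besselOp_neg_apply_eq_integral_heatOp {s : ℝ} (hs : 0 < s) (φ : 𝓢(V, E)) (x : V) :
    besselOp (-s) φ x = ∫ τ, heatOp τ φ x ∂gammaMeasure (s / 2) 1 := by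
  have := isProbabilityMeasure_gammaMeasure (half_pos hs) one_pos
  have hpos := ae_pos_gammaMeasure (s / 2) 1
  have hlaplace (ξ : V) : ∫ τ, Real.exp (-(τ * ‖ξ‖ ^ 2)) ∂gammaMeasure (s / 2) 1 =
      (1 + ‖ξ‖ ^ 2) ^ (-s / 2) := by
    rw [integral_exp_neg_mul_gammaMeasure (half_pos hs) one_pos (by positivity), one_div,
      Real.inv_rpow (by positivity), ← Real.rpow_neg (by positivity), neg_div]
  calc besselOp (-s) φ x
      = ∫ ξ, 𝐞 (inner ℝ ξ x) • (1 + ‖ξ‖ ^ 2) ^ (-s / 2) • 𝓕 φ ξ :=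
        fourierMultiplierCLM_apply_eq_integral (by fun_prop) φ x
    _ = ∫ ξ, (∫ τ, 𝐞 (inner ℝ ξ x) • Real.exp (-(τ * ‖ξ‖ ^ 2)) • 𝓕 φ ξ
          ∂gammaMeasure (s / 2) 1) := by
        simp_rw [Circle.smul_def, integral_smul, integral_smul_const, hlaplace]
    _ = ∫ τ, (∫ ξ, 𝐞 (inner ℝ ξ x) • Real.exp (-(τ * ‖ξ‖ ^ 2)) • 𝓕 φ ξ)
          ∂gammaMeasure (s / 2) 1 :=
        (integral_integral_swap (integrable_prod_fourierChar_smul_exp_neg_mul_smul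
          (hpos.mono fun _ ↦ le_of_lt) (𝓕 φ).integrable x)).symm
    _ = ∫ τ, heatOp τ φ x ∂gammaMeasure (s / 2) 1 := by
        refine integral_congr_ae (hpos.mono fun τ hτ ↦ ?_)
        exact (fourierMultiplierCLM_apply_eq_integral
          (hasTemperateGrowth_exp_neg_mul_norm_sq hτ) φ x).symm

theorem eLpNorm_top_besselOp_neg_le_lintegral {s : ℝ} (hs : 0 < s) (φ : 𝓢(V, E)) :
    eLpNorm (besselOp (-s) φ) ∞ volume ≤
      ∫⁻ τ, eLpNorm (heatOp τ φ) ∞ volume ∂gammaMeasure (s / 2) 1 := by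
  refine eLpNormEssSup_le_of_ae_enorm_bound (.of_forall fun x ↦ ?_)
  rw [besselOp_neg_apply_eq_integral_heatOp hs]
  exact (enorm_integral_le_lintegral_enorm _).trans
    (lintegral_mono fun τ ↦ enorm_le_eLpNorm_top_of_continuous (heatOp τ φ).continuous x)

theorem eLpNorm_top_besselOp_neg_le_add {s δ : ℝ} (hs : 0 < s) (hδ : 0 < δ) (φ : 𝓢(V, E)) :
    eLpNorm (besselOp (-s) φ) ∞ volume ≤
      gammaMeasure (s / 2) 1 (Iic δ) * eLpNorm φ ∞ volume + eLpNorm (heatOp δ φ) ∞ volume := by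
  have := isProbabilityMeasure_gammaMeasure (half_pos hs) one_pos
  set γ := gammaMeasure (s / 2) 1
  have hsmall : ∀ᵐ τ ∂γ.restrict (Iic δ), eLpNorm (heatOp τ φ) ∞ volume ≤ eLpNorm φ ∞ volume :=
    ae_restrict_of_ae ((ae_pos_gammaMeasure _ _).mono fun τ hτ ↦ eLpNorm_top_heatOp_le hτ φ)
  have hlarge (τ : ℝ) (hτ : δ < τ) :
      eLpNorm (heatOp τ φ) ∞ volume ≤ eLpNorm (heatOp δ φ) ∞ volume := by
    rw [← sub_add_cancel τ δ, ← heatOp_heatOp (sub_pos.2 hτ) hδ]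
    exact eLpNorm_top_heatOp_le (sub_pos.2 hτ) _
  calc eLpNorm (besselOp (-s) φ) ∞ volume
      ≤ ∫⁻ τ, eLpNorm (heatOp τ φ) ∞ volume ∂γ := eLpNorm_top_besselOp_neg_le_lintegral hs φ
    _ = (∫⁻ τ in Iic δ, eLpNorm (heatOp τ φ) ∞ volume ∂γ) +
          ∫⁻ τ in Ioi δ, eLpNorm (heatOp τ φ) ∞ volume ∂γ := by
        rw [← compl_Iic, lintegral_add_compl _ measurableSet_Iic]
    _ ≤ (∫⁻ _ in Iic δ, eLpNorm φ ∞ volume ∂γ) +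
          ∫⁻ _ in Ioi δ, eLpNorm (heatOp δ φ) ∞ volume ∂γ :=
        add_le_add (lintegral_mono_ae hsmall) (setLIntegral_mono measurable_const hlarge)
    _ ≤ γ (Iic δ) * eLpNorm φ ∞ volume + eLpNorm (heatOp δ φ) ∞ volume := by
        rw [setLIntegral_const, setLIntegral_const, mul_comm]
        gcongr
        exact mul_le_of_le_one_right' prob_le_one

end Subordination

theorem besselPotential_neg_ofReal (n : ℕ) (s : ℝ) (φ : 𝓢(EuclideanSpace ℝ (Fin n), ℂ)) :
    besselPotential n (-(s : ℂ)) φ = besselOp s φ := by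
  rw [besselPotential, besselOp, fourierMultiplierCLM_apply, fourierInv_coe]
  congr 1 with ξ
  rw [smulLeftCLM_apply_apply (by fun_prop), fourier_coe, real_smul,
    Complex.ofReal_cpow (by positivity)]
  push_cast
  rw [neg_neg]

theorem wong_inequality_infty_general [CompleteSpace E] {s t : ℝ} (hst : s < t) {ε : ℝ}
    (hε : 0 < ε) :
    ∃ C : ℝ, 0 < C ∧ ∀ φ : 𝓢(V, E),
      eLpNorm (besselOp s φ) ∞ volume ≤
        ENNReal.ofReal ε * eLpNorm (besselOp t φ) ∞ volume +
          ENNReal.ofReal C * eLpNorm φ ∞ volume := by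
  have hts : 0 < t - s := sub_pos.2 hst
  have := isProbabilityMeasure_gammaMeasure (half_pos hts) one_pos
  obtain ⟨δ, hδ, hγ⟩ := exists_gt_measure_Iic_lt (gammaMeasure ((t - s) / 2) 1)
    (a := 0) (ε := ENNReal.ofReal ε) (by simpa [gammaMeasure_Iic_zero] using hε)
  obtain ⟨C, hC, hbound⟩ := exists_eLpNorm_top_heatOp_besselOp_le (V := V) (E := E) t hδ
  refine ⟨C, hC, fun φ ↦ ?_⟩
  calc eLpNorm (besselOp s φ) ∞ volume
      = eLpNorm (besselOp (-(t - s)) (besselOp t φ)) ∞ volume := by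
        rw [besselOp_besselOp, neg_sub, sub_add_cancel]
    _ ≤ gammaMeasure ((t - s) / 2) 1 (Iic δ) * eLpNorm (besselOp t φ) ∞ volume +
          eLpNorm (heatOp δ (besselOp t φ)) ∞ volume := eLpNorm_top_besselOp_neg_le_add hts hδ _
    _ ≤ ENNReal.ofReal ε * eLpNorm (besselOp t φ) ∞ volume +
          ENNReal.ofReal C * eLpNorm φ ∞ volume := by
        gcongr
        exact hbound φ

/-- Wong's inequality for `q = ∞`: for `0 < s < t` and every `ε > 0` there is `C > 0`
with `‖J_{-s} φ‖_∞ ≤ ε ‖J_{-t} φ‖_∞ + C ‖φ‖_∞` for all Schwartz `φ`. -/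
theorem wong_inequality_infty (n : ℕ) (s t : ℝ) (hs : 0 < s) (hst : s < t) :
    ∀ ε : ℝ, 0 < ε → ∃ C : ℝ, 0 < C ∧
      ∀ φ : 𝓢(EuclideanSpace ℝ (Fin n), ℂ),
        eLpNorm (besselPotential n (-(s : ℂ)) ⇑φ) ∞ volume ≤
          ENNReal.ofReal ε * eLpNorm (besselPotential n (-(t : ℂ)) ⇑φ) ∞ volume +
            ENNReal.ofReal C * eLpNorm (⇑φ) ∞ volume := by
  intro ε hε
  simpa only [besselPotential_neg_ofReal] using wong_inequality_infty_general hst hε
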